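/- Let X⁺ be an open dense subset of ℝ^n whose complement is the zero locus of a polynomial h ∈ ℝ[x_1,…,x_n]. Let T be a tempered distribution on ℝ^n of finite order that vanishes on all smooth compactly supported functions supported in X⁺. Then there exists M ∈ ℤ_{≥0} such that T(h^M ξ) = 0 for all Schwartz functions ξ. -/

import Mathlib

open MeasureTheory

/-- Partial derivative in the `i`-th coordinate direction. -/
noncomputable def dirD {n : ℕ} (i : Fin n) (g : EuclideanSpace ℝ (Fin n) → ℂ) :
    EuclideanSpace ℝ (Fin n) → ℂ :=
  fun x => fderiv ℝ g x (EuclideanSpace.single i 1)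

/-- The multi-index derivative `∂^α`. -/
noncomputable def mulDiff {n : ℕ} (α : Fin n → ℕ) (g : EuclideanSpace ℝ (Fin n) → ℂ) :
    EuclideanSpace ℝ (Fin n) → ℂ :=
  (List.finRange n).foldr (fun i h => (dirD i)^[α i] h) g

/-- A tempered distribution `T` on `ℝ^n` has order `≤ (a, b)` if
`|T ξ| ≤ C · sup_{|α| ≤ a, |β| ≤ b} sup_x |x^β ∂^α ξ(x)|` for all Schwartz `ξ`. -/
def HasOrder {n : ℕ} (T : (EuclideanSpace ℝ (Fin n) → ℂ) →ₗ[ℂ] ℂ) (a b : ℕ) : Prop :=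
  ∃ C > (0 : ℝ), ∀ ξ : SchwartzMap (EuclideanSpace ℝ (Fin n)) ℂ, ∀ M : ℝ,
    (∀ (α β : Fin n → ℕ) (x : EuclideanSpace ℝ (Fin n)),
      (∑ i, α i) ≤ a → (∑ i, β i) ≤ b →
      |∏ i, (x i) ^ (β i)| * ‖mulDiff α (⇑ξ) x‖ ≤ M) →
    ‖T ⇑ξ‖ ≤ C * M

open scoped LineDeriv SchwartzMap ContDiff

section Aux

abbrev EE (n : ℕ) := EuclideanSpace ℝ (Fin n)

lemma tg_fderiv {E : Type*} [NormedAddCommGroup E] [NormedSpace ℝ E] {f : E → ℝ}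
    (hf : f.HasTemperateGrowth) (v : E) : (fun x => fderiv ℝ f x v).HasTemperateGrowth := by
  have h1 : (fderiv ℝ f).HasTemperateGrowth := by
    refine ⟨hf.1.fderiv_right (by simp), fun n => ?_⟩
    obtain ⟨k, C, h⟩ := hf.2 (n + 1)
    refine ⟨k, C, fun x => ?_⟩
    rw [norm_iteratedFDeriv_fderiv]
    exact h x
  exact ((ContinuousLinearMap.apply ℝ ℝ v).hasTemperateGrowth).comp h1

lemma tg_deriv {f : ℝ → ℝ}
    (hf : f.HasTemperateGrowth) : (deriv f).HasTemperateGrowth := by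
  have := tg_fderiv hf 1
  simpa using! this

lemma tg_eval {n : ℕ} (h : MvPolynomial (Fin n) ℝ) :
    (fun x : EE n => MvPolynomial.eval (fun i => x i) h).HasTemperateGrowth := by
  induction h using MvPolynomial.induction_on with
  | C c => simp
  | add p q hp hq => simpa using! hp.add hq
  | mul_X p i hp =>
    have : (fun x : EE n => x i).HasTemperateGrowth :=
      (EuclideanSpace.proj (𝕜 := ℝ) i : EE n →L[ℝ] ℝ).hasTemperateGrowth
    simpa using! hp.mul this

/-- iterated Schwartz derivatives along a word -/
noncomputable def DS {n : ℕ} : List (Fin n) → 𝓢(EE n, ℂ) → 𝓢(EE n, ℂ)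
  | [], ξ => ξ
  | i :: L, ξ => ∂_{(EuclideanSpace.single i (1:ℝ) : EE n)} (DS L ξ)

lemma DS_add {n : ℕ} (L : List (Fin n)) (ξ η : 𝓢(EE n, ℂ)) :
    DS L (ξ + η) = DS L ξ + DS L η := by
  induction L with
  | nil => rfl
  | cons i L ih => simp only [DS, ih, LineDeriv.lineDerivOp_add]

lemma DS_concat {n : ℕ} (L : List (Fin n)) (i : Fin n) (ξ : 𝓢(EE n, ℂ)) :
    DS (L ++ [i]) ξ = DS L (∂_{(EuclideanSpace.single i (1:ℝ) : EE n)} ξ) := by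
  induction L with
  | nil => rfl
  | cons j L ih => simp only [DS, ih, List.cons_append]

lemma dirD_coe {n : ℕ} (i : Fin n) (ξ : 𝓢(EE n, ℂ)) :
    dirD i (⇑ξ) = ⇑(∂_{(EuclideanSpace.single i (1:ℝ) : EE n)} ξ : 𝓢(EE n, ℂ)) := by
  ext x
  rw [SchwartzMap.lineDerivOp_apply_eq_fderiv]; rfl

lemma dirD_iter {n : ℕ} (i : Fin n) (k : ℕ) (ξ : 𝓢(EE n, ℂ)) :
    (dirD i)^[k] (⇑ξ) = ⇑(DS (List.replicate k i) ξ) := by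
  induction k with
  | zero => rfl
  | succ k ih => rw [Function.iterate_succ_apply', ih, dirD_coe]; rfl

lemma DS_append {n : ℕ} (L L' : List (Fin n)) (ξ : 𝓢(EE n, ℂ)) :
    DS (L ++ L') ξ = DS L (DS L' ξ) := by
  induction L with
  | nil => rfl
  | cons j L ih => simp only [DS, ih, List.cons_append]

lemma mulDiff_eq {n : ℕ} (α : Fin n → ℕ) (ξ : 𝓢(EE n, ℂ)) :
    ∃ L : List (Fin n), L.length = ∑ i, α i ∧ mulDiff α (⇑ξ) = ⇑(DS L ξ) := by
  have key : ∀ l : List (Fin n), ∃ L : List (Fin n), L.length = (l.map α).sum ∧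
      l.foldr (fun i h => (dirD i)^[α i] h) (⇑ξ) = ⇑(DS L ξ) := by
    intro l
    induction l with
    | nil => exact ⟨[], rfl, rfl⟩
    | cons i l ih =>
      obtain ⟨L, h1, h2⟩ := ih
      refine ⟨List.replicate (α i) i ++ L, by simp [h1], ?_⟩
      rw [List.foldr_cons, h2, dirD_iter, DS_append]
  obtain ⟨L, h1, h2⟩ := key (List.finRange n)
  refine ⟨L, ?_, h2⟩
  rw [h1, Fin.sum_univ_def]

lemma deriv_smul_comp {n : ℕ} {p : EE n → ℝ} (hp : p.HasTemperateGrowth) {G : ℝ → ℝ}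
    (hG : G.HasTemperateGrowth) (ξ : 𝓢(EE n, ℂ)) (v : EE n) :
    ∂_{v} (SchwartzMap.smulLeftCLM ℂ (G ∘ p) ξ) =
      SchwartzMap.smulLeftCLM ℂ (G ∘ p) (∂_{v} ξ) +
      SchwartzMap.smulLeftCLM ℂ (deriv G ∘ p)
        (SchwartzMap.smulLeftCLM ℂ (fun x => fderiv ℝ p x v) ξ) := by
  ext x
  rw [SchwartzMap.lineDerivOp_apply_eq_fderiv, SchwartzMap.add_apply,
    SchwartzMap.smulLeftCLM_apply (hG.comp hp), SchwartzMap.smulLeftCLM_apply_apply (hG.comp hp),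
    SchwartzMap.smulLeftCLM_apply_apply ((tg_deriv hG).comp hp),
    SchwartzMap.smulLeftCLM_apply_apply (tg_fderiv hp v),
    SchwartzMap.lineDerivOp_apply_eq_fderiv]
  have hpd : DifferentiableAt ℝ p x := (hp.1.differentiable (by simp)) x
  have hGd : DifferentiableAt ℝ G (p x) := (hG.1.differentiable (by simp)) _
  have hgp : HasFDerivAt (G ∘ p) (deriv G (p x) • fderiv ℝ p x) x :=
    hGd.hasDerivAt.comp_hasFDerivAt x hpd.hasFDerivAt
  have := (hgp.smul (ξ.differentiableAt (x := x)).hasFDerivAt).fderiv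
  have e : (fun x => (G ∘ p) x • ξ x) = (G ∘ p) • ⇑ξ := rfl
  rw [e, this]
  simp [mul_assoc]

lemma word_bound {n : ℕ} {p : EE n → ℝ} (hp : p.HasTemperateGrowth) (b m : ℕ) :
    ∀ ξ : 𝓢(EE n, ℂ), ∃ C : ℝ, 0 ≤ C ∧ ∀ G : ℝ → ℝ, G.HasTemperateGrowth → ∀ ε : ℝ, 0 ≤ ε →
      (∀ j ≤ m, ∀ t, |iteratedDeriv j G t| ≤ ε * (1 + |t|)) →
      ∀ L : List (Fin n), L.length = m → ∀ x : EE n,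
        (1 + ‖x‖) ^ b * ‖DS L (SchwartzMap.smulLeftCLM ℂ (G ∘ p) ξ) x‖ ≤ C * ε := by
  induction m with
  | zero =>
    intro ξ
    have hq : (fun x => 1 + p x ^ 2).HasTemperateGrowth := by fun_prop
    set η := SchwartzMap.smulLeftCLM ℂ (fun x => 1 + p x ^ 2) ξ with hη
    obtain ⟨C, hC⟩ : ∃ C : ℝ, ∀ x, (1 + ‖x‖) ^ b * ‖η x‖ ≤ C := by
      refine ⟨2 ^ b * ((Finset.Iic (b, 0)).sup fun m => SchwartzMap.seminorm ℝ m.1 m.2) η,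
        fun x => ?_⟩
      have := SchwartzMap.one_add_le_sup_seminorm_apply (𝕜 := ℝ) (m := (b, 0)) (k := b) (n := 0)
        le_rfl le_rfl η x
      simpa using this
    have hC0 : 0 ≤ C := le_trans (by positivity) (hC 0)
    refine ⟨2 * C, by positivity, fun G hG ε hε hj L hL x => ?_⟩
    obtain rfl : L = [] := List.length_eq_zero_iff.mp hL
    have h0 : |G (p x)| ≤ ε * (1 + |p x|) := by simpa using hj 0 le_rfl (p x)
    have h1 : 1 + |p x| ≤ 2 * (1 + p x ^ 2) := by
      rw [← sq_abs]; nlinarith [sq_nonneg (|p x| - 1)]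
    have h2 := hC x
    rw [hη, SchwartzMap.smulLeftCLM_apply_apply hq, norm_smul, Real.norm_eq_abs,
      abs_of_nonneg (by positivity)] at h2
    simp only [DS]
    rw [SchwartzMap.smulLeftCLM_apply_apply (hG.comp hp), norm_smul, Real.norm_eq_abs]
    calc (1 + ‖x‖) ^ b * (|(G ∘ p) x| * ‖ξ x‖)
        ≤ (1 + ‖x‖) ^ b * ((ε * (2 * (1 + p x ^ 2))) * ‖ξ x‖) := by
          gcongr
          exact h0.trans (by gcongr)
      _ = 2 * ε * ((1 + ‖x‖) ^ b * ((1 + p x ^ 2) * ‖ξ x‖)) := by ring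
      _ ≤ 2 * ε * C := by gcongr
      _ = 2 * C * ε := by ring
  | succ m ih =>
    intro ξ
    choose C hC0 hC using ih
    let A : Fin n → 𝓢(EE n, ℂ) := fun i => ∂_{(EuclideanSpace.single i (1:ℝ) : EE n)} ξ
    let B : Fin n → 𝓢(EE n, ℂ) := fun i => SchwartzMap.smulLeftCLM ℂ
      (fun x => fderiv ℝ p x (EuclideanSpace.single i (1:ℝ) : EE n)) ξ
    refine ⟨∑ i, (C (A i) + C (B i)), Finset.sum_nonneg fun i _ => add_nonneg (hC0 _) (hC0 _),
      fun G hG ε hε hj L hL x => ?_⟩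
    obtain ⟨L', i, rfl⟩ : ∃ L' i, L = L' ++ [i] := by
      rcases List.eq_nil_or_concat L with h | ⟨L', i, h⟩
      · simp [h] at hL
      · exact ⟨L', i, by simpa using h⟩
    have hL' : L'.length = m := by simpa using hL
    have ha := hC (A i) G hG ε hε (fun j hjm => hj j (by omega)) L' hL' x
    have hb := hC (B i) (deriv G) (tg_deriv hG) ε hε
      (fun j hjm t => by rw [← iteratedDeriv_succ']; exact hj (j+1) (by omega) t) L' hL' x
    have hle : C (A i) + C (B i) ≤ ∑ i, (C (A i) + C (B i)) :=
      Finset.single_le_sum (f := fun i => C (A i) + C (B i))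
        (fun i _ => add_nonneg (hC0 _) (hC0 _)) (Finset.mem_univ i)
    rw [DS_concat, deriv_smul_comp hp hG, DS_add, SchwartzMap.add_apply]
    calc _ ≤ (1 + ‖x‖) ^ b * (‖DS L' (SchwartzMap.smulLeftCLM ℂ (G ∘ p) (A i)) x‖ +
            ‖DS L' (SchwartzMap.smulLeftCLM ℂ (deriv G ∘ p) (B i)) x‖) := by
          gcongr; exact norm_add_le _ _
      _ ≤ C (A i) * ε + C (B i) * ε := by rw [mul_add]; exact add_le_add ha hb
      _ ≤ _ := by rw [← add_mul]; gcongr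

lemma key_bound {n : ℕ} {T : (EE n → ℂ) →ₗ[ℂ] ℂ} {a b : ℕ} (hT : HasOrder T a b)
    {p : EE n → ℝ} (hp : p.HasTemperateGrowth) (ξ : 𝓢(EE n, ℂ)) :
    ∃ C : ℝ, 0 ≤ C ∧ ∀ G : ℝ → ℝ, G.HasTemperateGrowth → ∀ ε : ℝ, 0 ≤ ε →
      (∀ j ≤ a, ∀ t, |iteratedDeriv j G t| ≤ ε * (1 + |t|)) →
      ‖T (fun x => G (p x) • ξ x)‖ ≤ C * ε := by
  obtain ⟨K, hK, hT⟩ := hT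
  choose C hC0 hC using fun m => word_bound hp b m ξ
  refine ⟨K * ∑ m ∈ Finset.range (a+1), C m,
    mul_nonneg hK.le (Finset.sum_nonneg fun m _ => hC0 m), fun G hG ε hε hj => ?_⟩
  have e : (fun x => G (p x) • ξ x) = ⇑(SchwartzMap.smulLeftCLM ℂ (G ∘ p) ξ) := by
    rw [SchwartzMap.smulLeftCLM_apply (hG.comp hp)]; rfl
  rw [e, mul_assoc]
  apply hT
  intro α β x hα hβ
  obtain ⟨L, hL, hL2⟩ := mulDiff_eq α (SchwartzMap.smulLeftCLM ℂ (G ∘ p) ξ)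
  rw [hL2]
  have h1 := hC _ G hG ε hε (fun j hjm => hj j (hjm.trans hα)) L hL x
  have h2 : |∏ i, x i ^ β i| ≤ (1 + ‖x‖) ^ b := by
    rw [Finset.abs_prod]
    calc ∏ i, |x i ^ β i| ≤ ∏ i, (1 + ‖x‖) ^ β i := by
          apply Finset.prod_le_prod (fun _ _ => abs_nonneg _)
          intro i _
          rw [abs_pow]
          gcongr
          have := PiLp.norm_apply_le x i
          rw [Real.norm_eq_abs] at this
          linarith
      _ = (1 + ‖x‖) ^ (∑ i, β i) := Finset.prod_pow_eq_pow_sum _ _ _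
      _ ≤ _ := pow_le_pow_right₀ (by linarith [norm_nonneg x]) hβ
  calc _ ≤ (1 + ‖x‖) ^ b * ‖DS L (SchwartzMap.smulLeftCLM ℂ (G ∘ p) ξ) x‖ := by gcongr
    _ ≤ _ := h1
    _ ≤ _ := by
      gcongr
      exact Finset.single_le_sum (f := C) (fun m _ => hC0 m)
        (Finset.mem_range.mpr (by omega))

/-- the bump -/
noncomputable def bmp : ContDiffBump (0:ℝ) := ⟨1, 2, by norm_num, by norm_num⟩

lemma bmp_smooth : ContDiff ℝ ∞ (bmp : ℝ → ℝ) := bmp.contDiff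

lemma bdd_derivs {g : ℝ → ℝ} (hg : ContDiff ℝ ∞ g) (hc : HasCompactSupport g) (a : ℕ) :
    ∃ B : ℝ, 0 ≤ B ∧ ∀ j ≤ a, ∀ t, |iteratedDeriv j g t| ≤ B := by
  have : ∀ j : ℕ, ∃ B : ℝ, ∀ t, |iteratedDeriv j g t| ≤ B := by
    intro j
    have h1 : Continuous (iteratedFDeriv ℝ j g) := hg.continuous_iteratedFDeriv (mod_cast le_top)
    obtain ⟨B, hB⟩ := h1.bounded_above_of_compact_support (hc.iteratedFDeriv j)
    refine ⟨B, fun t => ?_⟩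
    rw [← Real.norm_eq_abs, ← norm_iteratedFDeriv_eq_norm_iteratedDeriv]
    exact hB t
  choose B hB using this
  have h0 : ∀ j, 0 ≤ B j := fun j => (abs_nonneg _).trans (hB j 0)
  refine ⟨∑ j ∈ Finset.range (a+1), B j, Finset.sum_nonneg fun j _ => h0 j, fun j hj t => ?_⟩
  exact (hB j t).trans (Finset.single_le_sum (f := B) (fun j _ => h0 j)
    (Finset.mem_range.mpr (by omega)))

lemma bmp_tg (c : ℝ) : (fun t => bmp (c * t)).HasTemperateGrowth := by
  have h1 : (bmp : ℝ → ℝ).HasTemperateGrowth := bmp.hasCompactSupport.hasTemperateGrowth bmp_smooth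
  have h2 : (fun t : ℝ => c * t).HasTemperateGrowth := by fun_prop
  exact h1.comp h2

lemma zero_of_small {z : ℂ} {C : ℝ} (h : ∀ k : ℕ, ‖z‖ ≤ C * ((k:ℝ)+1)⁻¹) : z = 0 := by
  have h1 : Filter.Tendsto (fun k : ℕ => C * ((k:ℝ)+1)⁻¹) Filter.atTop (nhds (C * 0)) := by
    refine Filter.Tendsto.const_mul C ?_
    simpa using tendsto_one_div_add_atTop_nhds_zero_nat (𝕜 := ℝ)
  have := ge_of_tendsto' h1 h
  simpa using this

lemma step_two {n : ℕ} {T : (EE n → ℂ) →ₗ[ℂ] ℂ} {a b : ℕ} (hT : HasOrder T a b) {U : Set (EE n)}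
    (hv : ∀ φ : EE n → ℂ, ContDiff ℝ (⊤ : ℕ∞) φ → HasCompactSupport φ → tsupport φ ⊆ U → T φ = 0)
    (η : 𝓢(EE n, ℂ)) (hη : tsupport η ⊆ U) : T η = 0 := by
  obtain ⟨C, hC0, hC⟩ := key_bound hT (Function.hasTemperateGrowth_norm_sq (EE n)) η
  obtain ⟨B, hB0, hB⟩ := bdd_derivs bmp_smooth bmp.hasCompactSupport a
  apply zero_of_small (C := C * (B + 1))
  intro k
  set c : ℝ := ((k:ℝ)+1)⁻¹ with hc
  have hcpos : 0 < c := by positivity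
  have hc1 : c ≤ 1 := inv_le_one_of_one_le₀ (by linarith [(Nat.cast_nonneg k : (0:ℝ) ≤ k)])
  have hG : (fun t => 1 - bmp (c * t)).HasTemperateGrowth :=
    (Function.HasTemperateGrowth.const (1:ℝ)).sub (bmp_tg c)
  have hmain := hC _ hG ((B+1) * c) (by positivity) ?_
  · have hz : T (fun x => bmp (c * ‖x‖^2) • η x) = 0 := by
      apply hv
      · have h1 : ContDiff ℝ ∞ (fun x : EE n => bmp (c * ‖x‖^2)) :=
          bmp_smooth.comp (contDiff_const.mul (contDiff_norm_sq ℝ))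
        exact h1.smul (η.smooth _)
      · apply HasCompactSupport.of_support_subset_isCompact
          (isCompact_closedBall (0 : EE n) (2 / c + 1))
        intro x hx
        rw [mem_closedBall_zero_iff]
        by_contra! hlt
        apply hx
        have h2 : 2 ≤ c * ‖x‖^2 := by
          have : 2 / c ≤ ‖x‖^2 := by
            have : 0 ≤ 2 / c := by positivity
            nlinarith
          rw [div_le_iff₀ hcpos] at this
          linarith
        have : bmp (c * ‖x‖^2) = 0 := by
          apply bmp.zero_of_le_dist
          rw [dist_zero_right, Real.norm_eq_abs]
          exact h2.trans (le_abs_self _)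
        simp [this]
      · refine (closure_mono ?_).trans hη
        intro x hx h0
        exact hx (by simp [h0])
    have e : (⇑η : EE n → ℂ) = (fun x => bmp (c * ‖x‖^2) • η x) +
        (fun x => (1 - bmp (c * ‖x‖^2)) • η x) := by
      ext x; simp [sub_mul]
    rw [e, map_add, hz, zero_add]
    exact hmain.trans_eq (by ring)
  · intro j hj t
    rcases Nat.eq_zero_or_pos j with rfl | hjp
    · rw [iteratedDeriv_zero]
      have h1 := bmp.le_one (x := c * t)
      have h2 := bmp.nonneg (x := c * t)
      rw [abs_of_nonneg (by linarith)]
      by_cases hct : |c * t| ≤ 1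
      · have : bmp (c * t) = 1 := by
          apply bmp.one_of_mem_closedBall
          rw [mem_closedBall_zero_iff]; exact hct
        rw [this]; simp only [sub_self]; positivity
      · push Not at hct
        rw [abs_mul, abs_of_pos hcpos] at hct
        have : 0 ≤ B * c * (1 + |t|) := by positivity
        nlinarith
    · rw [iteratedDeriv_const_sub hjp, iteratedDeriv_neg,
        iteratedDeriv_comp_const_mul (bmp_smooth.of_le (mod_cast le_top)) c, abs_neg, abs_mul,
        abs_pow, abs_of_pos hcpos]
      have h1 : c ^ j ≤ c := pow_le_of_le_one hcpos.le hc1 hjp.ne'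
      calc c ^ j * |iteratedDeriv j bmp (c * t)| ≤ c * B := by
            gcongr; exact hB j hj _
        _ ≤ (B + 1) * c * 1 := by nlinarith
        _ ≤ _ := by gcongr; linarith [abs_nonneg t]

end Aux

/-- A tempered distribution of finite order that vanishes on all smooth compactly
supported functions supported in `X⁺ = ℝ^n ∖ {h = 0}` is annihilated by multiplication by
a sufficiently high power of the polynomial `h`: there is `M ∈ ℤ_{≥0}` with `T(h^M ξ) = 0`
for every Schwartz `ξ`. -/
theorem stmt16 {n : ℕ} (h : MvPolynomial (Fin n) ℝ)
    (T : (EuclideanSpace ℝ (Fin n) → ℂ) →ₗ[ℂ] ℂ)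
    (a b : ℕ) (horder : HasOrder T a b)
    (hvanish : ∀ φ : EuclideanSpace ℝ (Fin n) → ℂ,
      ContDiff ℝ (⊤ : ℕ∞) φ → HasCompactSupport φ →
      tsupport φ ⊆ {x | MvPolynomial.eval (fun i => x i) h ≠ 0} → T φ = 0) :
    ∃ M : ℕ, ∀ ξ : SchwartzMap (EuclideanSpace ℝ (Fin n)) ℂ,
      T (fun x => ((MvPolynomial.eval (fun i => x i) h : ℝ) : ℂ) ^ M * ξ x) = 0 := by
  have hp := tg_eval h
  set p : EE n → ℝ := fun x => MvPolynomial.eval (fun i => x i) h with hpdef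
  have hpc : Continuous p := hp.1.continuous
  refine ⟨a + 1, fun ξ => ?_⟩
  obtain ⟨C, hC0, hC⟩ := key_bound horder hp ξ
  have hgs : ContDiff ℝ (⊤ : ℕ∞) (fun t : ℝ => t ^ (a+1) * bmp t) :=
    (contDiff_id.pow _).mul bmp_smooth
  obtain ⟨B, hB0, hB⟩ := bdd_derivs hgs bmp.hasCompactSupport.mul_left a
  apply zero_of_small (C := C * B)
  intro k
  set c : ℝ := (k:ℝ)+1 with hc
  have hcpos : 0 < c := by positivity
  have hc1 : 1 ≤ c := by linarith [(Nat.cast_nonneg k : (0:ℝ) ≤ k)]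
  have hG : (fun t : ℝ => t ^ (a+1) * bmp (c * t)).HasTemperateGrowth := by
    have h1 : (fun t : ℝ => t ^ (a+1)).HasTemperateGrowth := by fun_prop
    exact h1.mul (bmp_tg c)
  have hmain := hC _ hG (B * c⁻¹) (by positivity) ?_
  · have hK : (fun t : ℝ => t ^ (a+1) * (1 - bmp (c * t))).HasTemperateGrowth := by
      have h1 : (fun t : ℝ => t ^ (a+1)).HasTemperateGrowth := by fun_prop
      exact h1.mul ((Function.HasTemperateGrowth.const (1:ℝ)).sub (bmp_tg c))
    have hz := step_two horder hvanish
      (SchwartzMap.smulLeftCLM ℂ ((fun t : ℝ => t ^ (a+1) * (1 - bmp (c * t))) ∘ p) ξ) ?_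
    · rw [SchwartzMap.smulLeftCLM_apply (hK.comp hp)] at hz
      have e : (fun x => ((MvPolynomial.eval (fun i => x i) h : ℝ) : ℂ) ^ (a+1) * ξ x) =
          (fun x => ((fun t : ℝ => t ^ (a+1) * (1 - bmp (c * t))) ∘ p) x • ξ x) +
          (fun x => (p x ^ (a+1) * bmp (c * p x)) • ξ x) := by
        ext x
        simp only [Pi.add_apply, Function.comp, ← add_smul]
        rw [← mul_add, sub_add_cancel, mul_one]
        simp [hpdef]
      rw [e, map_add, hz, zero_add]
      exact hmain.trans_eq (by ring)
    · have hcl : IsClosed {x : EE n | 1 ≤ |c * p x|} :=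
        isClosed_le continuous_const (by fun_prop)
      refine (closure_minimal ?_ hcl).trans ?_
      · intro x hx
        by_contra hlt
        apply hx
        have hlt' : |c * p x| ≤ 1 := by
          simp only [Set.mem_setOf_eq, not_le] at hlt
          exact hlt.le
        have : bmp (c * p x) = 1 := by
          apply bmp.one_of_mem_closedBall
          rw [mem_closedBall_zero_iff]; exact hlt'
        rw [SchwartzMap.smulLeftCLM_apply_apply (hK.comp hp)]
        simp [this]
      · intro x hx h0
        have h0' : p x = 0 := h0
        simp only [Set.mem_setOf_eq, h0'] at hx
        norm_num at hx
  · intro j hj t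
    have e : (fun t : ℝ => t ^ (a+1) * bmp (c * t)) =
        fun t => (c⁻¹) ^ (a+1) * (fun s => (fun t : ℝ => t ^ (a+1) * bmp t) (c * s)) t := by
      ext t
      simp only
      rw [mul_pow, ← mul_assoc, ← mul_assoc, ← mul_pow, inv_mul_cancel₀ hcpos.ne', one_pow, one_mul]
    rw [e, iteratedDeriv_const_mul_field,
      iteratedDeriv_comp_const_mul (hgs.of_le (mod_cast le_top)) c, abs_mul, abs_mul,
      abs_pow, abs_pow, abs_inv, abs_of_pos hcpos]
    have h1 : (c⁻¹) ^ (a+1) * c ^ j ≤ c⁻¹ := by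
      have : c ^ j ≤ c ^ a := pow_le_pow_right₀ hc1 hj
      calc (c⁻¹) ^ (a+1) * c ^ j ≤ (c⁻¹) ^ (a+1) * c ^ a := by gcongr
        _ = c⁻¹ := by
          rw [pow_succ, mul_right_comm, ← mul_pow, inv_mul_cancel₀ hcpos.ne', one_pow, one_mul]
    calc _ = ((c⁻¹) ^ (a+1) * c ^ j) *
          |iteratedDeriv j (fun t : ℝ => t ^ (a+1) * bmp t) (c * t)| := by ring
      _ ≤ c⁻¹ * B := by gcongr; exact hB j hj _
      _ = B * c⁻¹ * 1 := by ring
      _ ≤ _ := by gcongr; linarith [abs_nonneg t]
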